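/- Let (k : K → X, f : X → M) be a Schreier extension with K commutative and cancellative. Then for all x ∈ X and a, a' ∈ K, k(a) + x = k(a') + x implies a = a'. In particular, whenever (x, y) ∈ R_E, the element a ∈ K with y = k(a) + x is unique. -/

import Mathlib

/-- A monoid extension: `K`, `X` additive monoids (not assumed commutative),
`M` a multiplicative monoid, `k : K → X` an injective monoid homomorphism whose image
is `{x | f x = 1}`, and `f : X → M` a surjective monoid homomorphism. -/
structure MonoidExtension {K X M : Type*} [AddMonoid K] [AddMonoid X] [Monoid M]
    (k : K → X) (f : X → M) : Prop where
  k_add : ∀ a b : K, k (a + b) = k a + k b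
  k_zero : k 0 = 0
  k_inj : Function.Injective k
  ker_eq : ∀ x : X, f x = 1 ↔ x ∈ Set.range k
  f_add : ∀ x y : X, f (x + y) = f x * f y
  f_zero : f 0 = 1
  f_surj : Function.Surjective f

/-- The set `B_m` of representatives of `m`. -/
def Reps {K X M : Type*} [AddMonoid K] [AddMonoid X] [Monoid M]
    (k : K → X) (f : X → M) (m : M) : Set X :=
  {u | f u = m ∧ ∀ x : X, f x = m → ∃! a : K, x = k a + u}

/-- A monoid extension is a Schreier extension if every `m` has a representative. -/
def IsSchreier {K X M : Type*} [AddMonoid K] [AddMonoid X] [Monoid M]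
    (k : K → X) (f : X → M) : Prop :=
  ∀ m : M, (Reps k f m).Nonempty

namespace MonoidExtension

variable {K X M : Type*} [AddMonoid K] [AddMonoid X] [Monoid M] {k : K → X} {f : X → M}

theorem f_k (hE : MonoidExtension k f) (a : K) : f (k a) = 1 :=
  (hE.ker_eq (k a)).2 ⟨a, rfl⟩

theorem f_k_add (hE : MonoidExtension k f) (a : K) (x : X) : f (k a + x) = f x := by
  rw [hE.f_add, hE.f_k, one_mul]

theorem injective_k_add_of_mem_reps (hE : MonoidExtension k f) {m : M} {u : X}
    (hu : u ∈ Reps k f m) : Function.Injective (k · + u) := by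
  intro a a' h
  have hfiber : f (k a + u) = m := (hE.f_k_add a u).trans hu.1
  exact (hu.2 (k a + u) hfiber).unique rfl h

theorem injective_k_add [IsRightCancelAdd K] (hE : MonoidExtension k f) {x : X}
    (hx : (Reps k f (f x)).Nonempty) : Function.Injective (k · + x) := by
  obtain ⟨u, hu⟩ := hx
  obtain ⟨b, rfl, -⟩ := hu.2 x rfl
  have hcomp : (k · + (k b + u)) = (k · + u) ∘ (· + b) := by
    funext a
    simp only [Function.comp_apply, hE.k_add, add_assoc]
  rw [hcomp]
  exact (hE.injective_k_add_of_mem_reps hu).comp (add_left_injective b)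

end MonoidExtension

theorem unique_a_general {K X M : Type*} [AddMonoid K] [IsRightCancelAdd K] [AddMonoid X]
    [Monoid M] (k : K → X) (f : X → M) (hE : MonoidExtension k f) (hS : IsSchreier k f) :
    (∀ (x : X) (a a' : K), k a + x = k a' + x → a = a') ∧
    (∀ x y : X, (∃ a : K, y = k a + x) → ∃! a : K, y = k a + x) := by
  have hinj (x : X) : Function.Injective (k · + x) := hE.injective_k_add (hS (f x))
  refine ⟨fun x _ _ h => hinj x h, ?_⟩
  rintro x y ⟨a, hy⟩
  exact ⟨a, hy, fun a' hy' => hinj x (hy'.symm.trans hy)⟩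

/-- Lemma 5.4 (lemma:unique_a): for a cc-Schreier extension (Schreier extension with `K`
commutative and cancellative), `k a + x = k a' + x` implies `a = a'`; in particular,
for `(x, y) ∈ R_E` the element `a ∈ K` with `y = k a + x` is unique. -/
theorem unique_a {K X M : Type*} [AddCommMonoid K] [IsCancelAdd K] [AddMonoid X]
    [Monoid M]
    (k : K → X) (f : X → M) (hE : MonoidExtension k f) (hS : IsSchreier k f) :
    (∀ (x : X) (a a' : K), k a + x = k a' + x → a = a') ∧
    (∀ x y : X, (∃ a : K, y = k a + x) → ∃! a : K, y = k a + x) :=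
  unique_a_general k f hE hS
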